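/- (Volume estimates for sections) Let Ω ⊂ ℝⁿ be open convex and u ∈ C²(Ω) strictly convex with λ ≤ det D²u ≤ Λ in Ω. If the section S_u(z,h) = { y ∈ Ω : u(y) < u(z) + Du(z)·(y−z) + h } is compactly contained in Ω, then C₀⁻¹ h^{n/2} ≤ |S_u(z,h)| ≤ C₀ h^{n/2} for a constant C₀ = C₀(n, λ, Λ). -/

import Mathlib

/-!
Write `S` for the section. Up to a translation, `S` is comparable to the image of a Euclidean ball
under some matrix `M`, in the sense that an ellipsoid `z + M (ball c r)` lies in `S` and `S` lies in
`z + M (ball 0 R)`, with `r`, `R` depending only on `n` (`exists_matrix`). This replaces John's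
ellipsoid: the columns of `M` are the edges at `z` of a simplex in `S` of almost maximal volume, and
Cramer's rule bounds the coordinates of the points of `S`. Thus `|S|` is comparable to `|det M|`,
and the claim reduces to showing that `(det M)²` is comparable to `hⁿ`.

Both inequalities come from comparing `u` with a quadratic barrier `k |M⁻¹ (x - z) - c|²`, whose
Hessian determinant is `(2k)ⁿ / (det M)²`. At an interior extremum of the difference the Hessians
are ordered as positive definite matrices, hence so are their determinants, which contradicts the
pinching of `det D²u` when `k` is too large or too small. So the extremum lies on the boundary, and
comparing the values there and at the centre bounds `h` (`height_pow_le` and `le_height_pow`).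
-/

open RealInnerProductSpace MeasureTheory

/-- Second partial derivative `D_{ij} f`. -/
noncomputable def D2 {n : ℕ} (f : EuclideanSpace ℝ (Fin n) → ℝ)
    (x : EuclideanSpace ℝ (Fin n)) (i j : Fin n) : ℝ :=
  fderiv ℝ (fun y => fderiv ℝ f y (EuclideanSpace.single i 1)) x (EuclideanSpace.single j 1)

/-- Hessian matrix of `f` at `x`. -/
noncomputable def Hess {n : ℕ} (f : EuclideanSpace ℝ (Fin n) → ℝ)
    (x : EuclideanSpace ℝ (Fin n)) : Matrix (Fin n) (Fin n) ℝ :=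
  Matrix.of fun i j => D2 f x i j

/-- The section `S_u(z,h)` of a convex function `u` on `Ω`. -/
noncomputable def sectMA {n : ℕ} (Ω : Set (EuclideanSpace ℝ (Fin n)))
    (u : EuclideanSpace ℝ (Fin n) → ℝ) (z : EuclideanSpace ℝ (Fin n)) (h : ℝ) :
    Set (EuclideanSpace ℝ (Fin n)) :=
  {y ∈ Ω | u y < u z + ⟪gradient u z, y - z⟫ + h}

namespace SectionVolume

/-! ### Determinants and second derivatives at an extremum -/

/-- Monotonicity of the determinant: write `A = RᵀR` and conjugate by `R⁻¹`, so that `A` becomes the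
identity and every eigenvalue of the conjugate of `B` is at least `1`. -/
theorem det_le_det_of_quad_le {n : ℕ} {A B : Matrix (Fin n) (Fin n) ℝ} (hA : A.PosDef)
    (hB : B.IsHermitian) (h : ∀ x : Fin n → ℝ, x ⬝ᵥ (A.mulVec x) ≤ x ⬝ᵥ (B.mulVec x)) :
    A.det ≤ B.det := by
  obtain ⟨R, hR⟩ : ∃ R : Matrix (Fin n) (Fin n) ℝ, A = R.transpose * R := by
    open MatrixOrder in
    obtain ⟨R, hR⟩ := CStarAlgebra.nonneg_iff_eq_star_mul_self.mp hA.posSemidef.nonneg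
    exact ⟨R, by simpa [Matrix.star_eq_conjTranspose] using hR⟩
  have hAdet : A.det = R.det ^ 2 := by rw [hR, Matrix.det_mul, Matrix.det_transpose, sq]
  have hRdet : R.det ≠ 0 := by
    intro h0
    have := hA.det_pos
    rw [hAdet, h0] at this
    simp at this
  have hRu : IsUnit R.det := isUnit_iff_ne_zero.mpr hRdet
  -- conjugating by `R⁻¹` turns `A` into the identity
  set C : Matrix (Fin n) (Fin n) ℝ := R⁻¹.transpose * B * R⁻¹ with hC
  have hCh : C.IsHermitian := by
    have := Matrix.isHermitian_conjTranspose_mul_mul R⁻¹ hB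
    simpa [hC] using this
  have hCq : ∀ x : Fin n → ℝ, x ⬝ᵥ x ≤ x ⬝ᵥ (C.mulVec x) := by
    intro x
    have h1 := h (R⁻¹.mulVec x)
    have h2 : ∀ X : Matrix (Fin n) (Fin n) ℝ, (R⁻¹.mulVec x) ⬝ᵥ (X.mulVec (R⁻¹.mulVec x))
        = x ⬝ᵥ ((R⁻¹.transpose * X * R⁻¹).mulVec x) := by
      intro X
      rw [← Matrix.mulVec_mulVec, ← Matrix.mulVec_mulVec, Matrix.dotProduct_mulVec x,
        Matrix.vecMul_transpose]
    rw [h2, h2] at h1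
    have h3 : R⁻¹.transpose * A * R⁻¹ = 1 := by
      rw [hR, Matrix.mul_assoc, Matrix.mul_assoc, Matrix.mul_nonsing_inv _ hRu, Matrix.mul_one,
        ← Matrix.transpose_mul, Matrix.mul_nonsing_inv _ hRu, Matrix.transpose_one]
    rwa [h3, Matrix.one_mulVec] at h1
  have hCdet : 1 ≤ C.det := by
    rw [hCh.det_eq_prod_eigenvalues]
    have hev : ∀ i, 1 ≤ hCh.eigenvalues i := by
      intro i
      have h4 := hCq (hCh.eigenvectorBasis i).ofLp
      have h5 := hCh.eigenvalues_eq i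
      have h6 : (hCh.eigenvectorBasis i).ofLp ⬝ᵥ (hCh.eigenvectorBasis i).ofLp = 1 := by
        have := EuclideanSpace.real_norm_sq_eq (hCh.eigenvectorBasis i)
        rw [hCh.eigenvectorBasis.orthonormal.1 i] at this
        simp [dotProduct, ← sq] at this ⊢
        exact this.symm
      rw [h6] at h4
      simp at h5
      rwa [h5]
    calc (1:ℝ) = ∏ _i : Fin n, 1 := by simp
      _ ≤ ∏ i, hCh.eigenvalues i := Finset.prod_le_prod (fun _ _ => zero_le_one) fun i _ => hev i
  have hBdet : B.det = R.det ^ 2 * C.det := by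
    rw [hC, Matrix.det_mul, Matrix.det_mul, Matrix.det_transpose, Matrix.det_nonsing_inv,
      Ring.inverse_eq_inv']
    field_simp
  rw [hBdet, hAdet]
  nlinarith [sq_nonneg R.det]

/-- Were `H < 0`, the second derivative test would make the local minimum `0` also a local maximum,
so `g` would be constant near `0` and `H` would vanish. -/
theorem second_deriv_nonneg_of_isLocalMin {g : ℝ → ℝ} {g' : ℝ → ℝ} {H : ℝ}
    (h1 : ∀ᶠ t in nhds 0, HasDerivAt g (g' t) t) (h2 : HasDerivAt g' H 0)
    (hm : IsLocalMin g 0) : 0 ≤ H := by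
  by_contra hH
  push Not at hH
  have hd : deriv g =ᶠ[nhds 0] g' := h1.mono fun t ht => ht.deriv
  have hdd : deriv (deriv g) 0 = H := by rw [hd.deriv_eq, h2.deriv]
  have hM : IsLocalMax g 0 := isLocalMax_of_deriv_deriv_neg (by rw [hdd]; exact hH)
    hm.deriv_eq_zero h1.self_of_nhds.continuousAt
  have hc : g =ᶠ[nhds 0] fun _ => g 0 := by
    filter_upwards [hm, hM] with t h h' using le_antisymm h' h
  have : deriv (deriv g) 0 = 0 := by
    rw [hc.deriv.deriv_eq]
    simp
  linarith

variable {n : ℕ}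

theorem line_hasDerivAt {f : EuclideanSpace ℝ (Fin n) → ℝ} {p : EuclideanSpace ℝ (Fin n)}
    (hf : ContDiffAt ℝ 2 f p) (x : EuclideanSpace ℝ (Fin n)) :
    (∀ᶠ t : ℝ in nhds 0, HasDerivAt (fun t : ℝ => f (p + t • x)) (fderiv ℝ f (p + t • x) x) t) ∧
    HasDerivAt (fun t : ℝ => fderiv ℝ f (p + t • x) x) (fderiv ℝ (fderiv ℝ f) p x x) 0 := by
  have hl : ∀ t : ℝ, HasDerivAt (fun t : ℝ => p + t • x) x t := fun t => by
    simpa using ((hasDerivAt_id t).smul_const x).const_add p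
  have hcont : Filter.Tendsto (fun t : ℝ => p + t • x) (nhds 0) (nhds p) := by
    simpa using (hl 0).continuousAt.tendsto
  constructor
  · have h1 : ∀ᶠ q in nhds p, DifferentiableAt ℝ f q :=
      (hf.eventually (by simp)).mono fun q hq => hq.differentiableAt (by simp)
    filter_upwards [hcont.eventually h1] with t ht
    exact ht.hasFDerivAt.comp_hasDerivAt t (hl t)
  · have h2 : DifferentiableAt ℝ (fderiv ℝ f) p :=
      (hf.fderiv_right (m := 1) (by norm_num)).differentiableAt (by simp)
    have h3 : HasFDerivAt (fderiv ℝ f) (fderiv ℝ (fderiv ℝ f) p) (p + (0:ℝ) • x) := by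
      simpa using h2.hasFDerivAt
    have h4 := h3.comp_hasDerivAt (0:ℝ) (hl 0)
    exact h4.clm_apply (hasDerivAt_const _ x) |>.congr_deriv (by simp)

/-- If `f` minus a quadratic polynomial has a local minimum at `p` along the direction `x`, the
second derivative of `f` along `x` dominates that of the polynomial. -/
theorem two_mul_le_hess_of_isLocalMin {f : EuclideanSpace ℝ (Fin n) → ℝ}
    {p : EuclideanSpace ℝ (Fin n)} (hf : ContDiffAt ℝ 2 f p) (x : EuclideanSpace ℝ (Fin n))
    {a b c : ℝ} (hm : IsLocalMin (fun t : ℝ => f (p + t • x) - (a + b * t + c * t ^ 2)) 0) :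
    2 * c ≤ fderiv ℝ (fderiv ℝ f) p x x := by
  obtain ⟨h1, h2⟩ := line_hasDerivAt hf x
  have q1 : ∀ t : ℝ, HasDerivAt (fun t : ℝ => a + b * t + c * t ^ 2) (b + 2 * c * t) t := fun t =>
    ((((hasDerivAt_id t).const_mul b).const_add a).add
      (((hasDerivAt_id t).pow 2).const_mul c)).congr_deriv (by simp; ring)
  have q2 : HasDerivAt (fun t : ℝ => b + 2 * c * t) (2 * c) 0 :=
    (((hasDerivAt_id (0:ℝ)).const_mul (2 * c)).const_add b).congr_deriv (by simp)
  have := second_deriv_nonneg_of_isLocalMin (h1.mono fun t ht => ht.sub (q1 t)) (h2.sub q2) hm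
  linarith

theorem hess_le_two_mul_of_isLocalMax {f : EuclideanSpace ℝ (Fin n) → ℝ}
    {p : EuclideanSpace ℝ (Fin n)} (hf : ContDiffAt ℝ 2 f p) (x : EuclideanSpace ℝ (Fin n))
    {a b c : ℝ} (hm : IsLocalMax (fun t : ℝ => f (p + t • x) - (a + b * t + c * t ^ 2)) 0) :
    fderiv ℝ (fderiv ℝ f) p x x ≤ 2 * c := by
  obtain ⟨h1, h2⟩ := line_hasDerivAt hf x
  have q1 : ∀ t : ℝ, HasDerivAt (fun t : ℝ => a + b * t + c * t ^ 2) (b + 2 * c * t) t := fun t =>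
    ((((hasDerivAt_id t).const_mul b).const_add a).add
      (((hasDerivAt_id t).pow 2).const_mul c)).congr_deriv (by simp; ring)
  have q2 : HasDerivAt (fun t : ℝ => b + 2 * c * t) (2 * c) 0 :=
    (((hasDerivAt_id (0:ℝ)).const_mul (2 * c)).const_add b).congr_deriv (by simp)
  have := second_deriv_nonneg_of_isLocalMin (h1.mono fun t ht => (ht.sub (q1 t)).neg) (h2.sub q2).neg hm.neg
  linarith

theorem D2_eq {f : EuclideanSpace ℝ (Fin n) → ℝ} {p : EuclideanSpace ℝ (Fin n)}
    (hf : ContDiffAt ℝ 2 f p) (i j : Fin n) :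
    D2 f p i j = fderiv ℝ (fderiv ℝ f) p (EuclideanSpace.single j 1)
      (EuclideanSpace.single i 1) := by
  have h2 : DifferentiableAt ℝ (fderiv ℝ f) p :=
    (hf.fderiv_right (m := 1) (by norm_num)).differentiableAt (by simp)
  rw [D2, fderiv_clm_apply h2 (by fun_prop)]
  simp

theorem hess_isHermitian {f : EuclideanSpace ℝ (Fin n) → ℝ} {p : EuclideanSpace ℝ (Fin n)}
    (hf : ContDiffAt ℝ 2 f p) : (Hess f p).IsHermitian := by
  ext i j
  simp only [Hess, Matrix.conjTranspose_apply, Matrix.of_apply, star_trivial, D2_eq hf]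
  exact hf.isSymmSndFDerivAt (by simp) _ _

theorem hess_quad {f : EuclideanSpace ℝ (Fin n) → ℝ} {p : EuclideanSpace ℝ (Fin n)}
    (hf : ContDiffAt ℝ 2 f p) (x : Fin n → ℝ) :
    x ⬝ᵥ ((Hess f p).mulVec x) =
      fderiv ℝ (fderiv ℝ f) p (WithLp.toLp 2 x) (WithLp.toLp 2 x) := by
  have hx : WithLp.toLp 2 x = ∑ i, x i • EuclideanSpace.single i (1:ℝ) := by
    ext j
    simp [Finset.sum_apply, Pi.single_apply]
  rw [hx]
  simp only [map_sum, map_smul, _root_.sum_apply, _root_.smul_apply,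
    smul_eq_mul, dotProduct, Matrix.mulVec, Hess, Matrix.of_apply, D2_eq hf, Finset.mul_sum]
  refine Finset.sum_congr rfl fun i _ => Finset.sum_congr rfl fun j _ => ?_
  ring

theorem gradient_ineq {Ω : Set (EuclideanSpace ℝ (Fin n))} {u : EuclideanSpace ℝ (Fin n) → ℝ}
    (hu : ConvexOn ℝ Ω u) {p y : EuclideanSpace ℝ (Fin n)} (hp : p ∈ Ω) (hy : y ∈ Ω)
    (hd : DifferentiableAt ℝ u p) : u p + fderiv ℝ u p (y - p) ≤ u y := by
  have hl : HasDerivAt (fun t : ℝ => p + t • (y - p)) (y - p) 0 := by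
    simpa using ((hasDerivAt_id (0:ℝ)).smul_const (y - p)).const_add p
  have h1 : HasFDerivAt u (fderiv ℝ u p) (p + (0:ℝ) • (y - p)) := by simpa using hd.hasFDerivAt
  have h2 := (h1.comp_hasDerivAt (0:ℝ) hl).tendsto_slope_zero_right
  have h3 : fderiv ℝ u p (y - p) ≤ u y - u p := by
    refine le_of_tendsto h2 ?_
    filter_upwards [Ioo_mem_nhdsGT (zero_lt_one (α := ℝ))] with t ht
    have h4 := hu.2 hp hy (sub_nonneg.mpr ht.2.le) ht.1.le (by ring)
    have h5 : (1 - t) • p + t • y = p + t • (y - p) := by module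
    rw [h5] at h4
    simp only [smul_eq_mul, Function.comp, zero_add, zero_smul, add_zero] at h4 ⊢
    rw [inv_mul_le_iff₀ ht.1]
    linarith
  linarith

/-- A convex function minus its tangent affine function has a minimum at the point of contact, so
the Hessian is positive semidefinite; the determinant condition makes it definite. -/
theorem hess_posDef {Ω : Set (EuclideanSpace ℝ (Fin n))} (hΩ : IsOpen Ω)
    {u : EuclideanSpace ℝ (Fin n) → ℝ} (hu : ConvexOn ℝ Ω u) {p : EuclideanSpace ℝ (Fin n)}
    (hp : p ∈ Ω) (hc : ContDiffAt ℝ 2 u p) (hdet : 0 < (Hess u p).det) : (Hess u p).PosDef := by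
  have hpsd : (Hess u p).PosSemidef := by
    refine .of_dotProduct_mulVec_nonneg (hess_isHermitian hc) fun x => ?_
    rw [star_trivial, hess_quad hc]
    set X : EuclideanSpace ℝ (Fin n) := WithLp.toLp 2 x
    have hev : ∀ᶠ t : ℝ in nhds 0, p + t • X ∈ Ω := by
      have : ContinuousAt (fun t : ℝ => p + t • X) 0 := by fun_prop
      exact this.eventually_mem (by simpa using hΩ.mem_nhds hp)
    have := two_mul_le_hess_of_isLocalMin (a := u p) (b := fderiv ℝ u p X) (c := 0) hc X (by
      filter_upwards [hev] with t ht
      have := gradient_ineq hu hp ht (hc.differentiableAt (by simp))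
      simp only [add_sub_cancel_left, map_smul, smul_eq_mul] at this
      simp
      linarith)
    simpa using this
  exact hpsd.posDef_iff_det_ne_zero.mpr hdet.ne'

/-! ### Comparison with quadratic barriers -/

/-- The coordinate `M⁻¹ (x - z) - c` of a point `x`; the sub-level sets of its norm are
ellipsoids when `M` is invertible. -/
noncomputable def ellCoord (M : Matrix (Fin n) (Fin n) ℝ) (z c x : EuclideanSpace ℝ (Fin n)) :
    EuclideanSpace ℝ (Fin n) :=
  Matrix.toEuclideanCLM (𝕜 := ℝ) M⁻¹ (x - z) - c

theorem ellCoord_line (M : Matrix (Fin n) (Fin n) ℝ) (z c p x : EuclideanSpace ℝ (Fin n)) (t : ℝ) :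
    ‖ellCoord M z c (p + t • x)‖ ^ 2 = ‖ellCoord M z c p‖ ^ 2
      + 2 * ⟪ellCoord M z c p, Matrix.toEuclideanCLM (𝕜 := ℝ) M⁻¹ x⟫ * t
      + ‖Matrix.toEuclideanCLM (𝕜 := ℝ) M⁻¹ x‖ ^ 2 * t ^ 2 := by
  have h1 : ellCoord M z c (p + t • x)
      = ellCoord M z c p + t • Matrix.toEuclideanCLM (𝕜 := ℝ) M⁻¹ x := by
    simp only [ellCoord, map_sub, map_add, map_smul]
    abel
  rw [h1, norm_add_sq_real, inner_smul_right, norm_smul, Real.norm_eq_abs, mul_pow, sq_abs]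
  ring

/-- The matrix `2k NᵀN`, with `N = M⁻¹`, is the Hessian of the barrier `k |M⁻¹ (x - z) - c|²`; this
computes its quadratic form (with `k` for `2k`). -/
theorem quadForm_eq (N : Matrix (Fin n) (Fin n) ℝ) (k : ℝ) (x : Fin n → ℝ) :
    x ⬝ᵥ ((k • (N.transpose * N)).mulVec x)
      = k * ‖Matrix.toEuclideanCLM (𝕜 := ℝ) N (WithLp.toLp 2 x)‖ ^ 2 := by
  rw [Matrix.smul_mulVec, dotProduct_smul, ← Matrix.mulVec_mulVec, Matrix.dotProduct_mulVec,
    Matrix.vecMul_transpose, EuclideanSpace.real_norm_sq_eq, smul_eq_mul]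
  simp [dotProduct, sq]

theorem quadForm_det (M : Matrix (Fin n) (Fin n) ℝ) (k : ℝ) :
    (k • (M⁻¹.transpose * M⁻¹)).det = k ^ n / M.det ^ 2 := by
  rw [Matrix.det_smul, Matrix.det_mul, Matrix.det_transpose, Matrix.det_nonsing_inv,
    Ring.inverse_eq_inv', Fintype.card_fin]
  field_simp

theorem quadForm_isHermitian (N : Matrix (Fin n) (Fin n) ℝ) (k : ℝ) :
    (k • (N.transpose * N)).IsHermitian := by
  ext i j
  simp [Matrix.mul_apply, mul_comm]

theorem tendsto_line (p x : EuclideanSpace ℝ (Fin n)) :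
    Filter.Tendsto (fun t : ℝ => p + t • x) (nhds 0) (nhds p) := by
  have : ContinuousAt (fun t : ℝ => p + t • x) 0 := by fun_prop
  simpa using this.tendsto

/-- Comparison at an interior maximum of `f` minus (linear function + quadratic barrier). -/
theorem det_le_of_isLocalMax {f : EuclideanSpace ℝ (Fin n) → ℝ} {p : EuclideanSpace ℝ (Fin n)}
    (hf : ContDiffAt ℝ 2 f p) (hpos : (Hess f p).PosDef) (M : Matrix (Fin n) (Fin n) ℝ)
    (z c : EuclideanSpace ℝ (Fin n)) (l : EuclideanSpace ℝ (Fin n) →L[ℝ] ℝ) (k : ℝ)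
    (hm : IsLocalMax (fun x => f x - (l x + k * ‖ellCoord M z c x‖ ^ 2)) p) :
    (Hess f p).det ≤ (2 * k) ^ n / M.det ^ 2 := by
  rw [← quadForm_det]
  refine det_le_det_of_quad_le hpos (quadForm_isHermitian _ _) fun x => ?_
  rw [hess_quad hf, quadForm_eq]
  set X : EuclideanSpace ℝ (Fin n) := WithLp.toLp 2 x
  have := hess_le_two_mul_of_isLocalMax hf X
    (a := l p + k * ‖ellCoord M z c p‖ ^ 2)
    (b := l X + k * (2 * ⟪ellCoord M z c p, Matrix.toEuclideanCLM (𝕜 := ℝ) M⁻¹ X⟫))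
    (c := k * ‖Matrix.toEuclideanCLM (𝕜 := ℝ) M⁻¹ X‖ ^ 2) (by
      filter_upwards [(tendsto_line p X).eventually hm] with t ht
      rw [ellCoord_line] at ht
      simp only [map_add, map_smul, smul_eq_mul, zero_smul, add_zero, mul_zero, ne_eq,
        OfNat.ofNat_ne_zero, not_false_eq_true, zero_pow] at ht ⊢
      linarith)
  linarith

/-- Comparison at an interior minimum of `f` minus (linear function + quadratic barrier). -/
theorem le_det_of_isLocalMin {f : EuclideanSpace ℝ (Fin n) → ℝ} {p : EuclideanSpace ℝ (Fin n)}
    (hf : ContDiffAt ℝ 2 f p) {M : Matrix (Fin n) (Fin n) ℝ} (hM : M.det ≠ 0)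
    (z c : EuclideanSpace ℝ (Fin n)) (l : EuclideanSpace ℝ (Fin n) →L[ℝ] ℝ) {k : ℝ} (hk : 0 < k)
    (hm : IsLocalMin (fun x => f x - (l x + k * ‖ellCoord M z c x‖ ^ 2)) p) :
    (2 * k) ^ n / M.det ^ 2 ≤ (Hess f p).det := by
  have hpos : ((2 * k) • (M⁻¹.transpose * M⁻¹)).PosDef := by
    have hpsd : ((2 * k) • (M⁻¹.transpose * M⁻¹)).PosSemidef := by
      refine .of_dotProduct_mulVec_nonneg (quadForm_isHermitian _ _) fun x => ?_
      rw [star_trivial, quadForm_eq]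
      positivity
    refine hpsd.posDef_iff_det_ne_zero.mpr ?_
    rw [quadForm_det]
    positivity
  rw [← quadForm_det]
  refine det_le_det_of_quad_le hpos (hess_isHermitian hf) fun x => ?_
  rw [hess_quad hf, quadForm_eq]
  set X : EuclideanSpace ℝ (Fin n) := WithLp.toLp 2 x
  have := two_mul_le_hess_of_isLocalMin hf X
    (a := l p + k * ‖ellCoord M z c p‖ ^ 2)
    (b := l X + k * (2 * ⟪ellCoord M z c p, Matrix.toEuclideanCLM (𝕜 := ℝ) M⁻¹ X⟫))
    (c := k * ‖Matrix.toEuclideanCLM (𝕜 := ℝ) M⁻¹ X‖ ^ 2) (by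
      filter_upwards [(tendsto_line p X).eventually hm] with t ht
      rw [ellCoord_line] at ht
      simp only [map_add, map_smul, smul_eq_mul, zero_smul, add_zero, mul_zero, ne_eq,
        OfNat.ofNat_ne_zero, not_false_eq_true, zero_pow] at ht ⊢
      linarith)
  linarith

/-! ### A weak John lemma -/

/-- The matrix whose columns are the vectors `y j - z`. -/
noncomputable def edgeMat (z : EuclideanSpace ℝ (Fin n)) (y : Fin n → EuclideanSpace ℝ (Fin n)) :
    Matrix (Fin n) (Fin n) ℝ :=
  Matrix.of fun i j => (y j - z) i

/-- A simplex with vertices `z, y₁, …, yₙ` in `S` of at least half of the supremal volume. By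
Cramer's rule, the coordinates of any point of `S` in the frame `y j - z` are at most `2`. -/
theorem exists_almost_max_simplex {S : Set (EuclideanSpace ℝ (Fin n))}
    {z : EuclideanSpace ℝ (Fin n)} (hS : IsOpen S) (hz : z ∈ S) (hK : IsCompact (closure S)) :
    ∃ y : Fin n → EuclideanSpace ℝ (Fin n), (∀ i, y i ∈ S) ∧ (edgeMat z y).det ≠ 0 ∧
      ∀ x ∈ S, ∀ i, |((edgeMat z y)⁻¹.mulVec (x - z).ofLp) i| ≤ 2 := by
  set F : (Fin n → EuclideanSpace ℝ (Fin n)) → ℝ := fun y => |(edgeMat z y).det| with hF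
  have hFc : Continuous F := by
    refine continuous_abs.comp (Continuous.matrix_det ?_)
    refine continuous_matrix fun i j => ?_
    simp only [edgeMat, Matrix.of_apply]
    fun_prop
  have hbdd : BddAbove (F '' Set.univ.pi fun _ => S) :=
    ((isCompact_univ_pi fun _ : Fin n => hK).bddAbove_image hFc.continuousOn).mono
      (Set.image_mono (Set.pi_mono fun _ _ => subset_closure))
  -- a small coordinate simplex at `z` shows that the supremum is positive
  obtain ⟨ε, hε, hball⟩ := Metric.isOpen_iff.mp hS z hz
  set y₀ : Fin n → EuclideanSpace ℝ (Fin n) := fun j => z + EuclideanSpace.single j (ε / 2)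
  have hy₀ : y₀ ∈ Set.univ.pi fun _ => S := by
    intro j _
    apply hball
    simp [y₀, abs_of_pos hε]
    linarith
  have hFy₀ : 0 < F y₀ := by
    have : edgeMat z y₀ = Matrix.diagonal fun _ => ε / 2 := by
      ext i j
      simp [edgeMat, y₀, Matrix.diagonal_apply]
    simp only [hF, this, Matrix.det_diagonal, Finset.prod_const]
    positivity
  set s := sSup (F '' Set.univ.pi fun _ => S) with hs
  have hle : ∀ y ∈ Set.univ.pi fun _ : Fin n => S, F y ≤ s := fun y hy =>
    le_csSup hbdd ⟨y, hy, rfl⟩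
  have hspos : 0 < s := hFy₀.trans_le (hle _ hy₀)
  obtain ⟨_, ⟨y, hy, rfl⟩, hlt⟩ := exists_lt_of_lt_csSup
    (Set.Nonempty.image F ⟨y₀, hy₀⟩) (half_lt_self hspos)
  have hFy : 0 < F y := by linarith
  have hdet : (edgeMat z y).det ≠ 0 := abs_pos.mp hFy
  refine ⟨y, fun i => hy i trivial, hdet, fun x hx i => ?_⟩
  -- Cramer's rule: each coordinate is a ratio of two edge determinants
  have h1 : ((edgeMat z y)⁻¹.mulVec (x - z).ofLp) i
      = (edgeMat z y).det⁻¹ * (edgeMat z (Function.update y i x)).det := by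
    have h2 : edgeMat z (Function.update y i x) = (edgeMat z y).updateCol i (x - z).ofLp := by
      ext a b
      by_cases hb : b = i
      · subst hb; simp [edgeMat]
      · simp [edgeMat, hb]
    rw [h2, ← Matrix.cramer_apply, Matrix.cramer_eq_adjugate_mulVec, Matrix.inv_def,
      Ring.inverse_eq_inv', Matrix.smul_mulVec, Pi.smul_apply, smul_eq_mul]
  have h3 : F (Function.update y i x) ≤ s := hle _ fun j _ => by
    by_cases hj : j = i
    · subst hj; simpa using hx
    · simpa [hj] using hy j trivial
  rw [h1, abs_mul, abs_inv, inv_mul_le_iff₀ hFy]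
  simp only [hF] at h3 hlt
  linarith

/-- The affine parametrisation `t ↦ z + M t`. -/
noncomputable def affPar (M : Matrix (Fin n) (Fin n) ℝ) (z t : EuclideanSpace ℝ (Fin n)) :
    EuclideanSpace ℝ (Fin n) :=
  z + Matrix.toEuclideanCLM (𝕜 := ℝ) M t

theorem ellCoord_affPar {M : Matrix (Fin n) (Fin n) ℝ} (hM : M.det ≠ 0)
    (z c t : EuclideanSpace ℝ (Fin n)) : ellCoord M z c (affPar M z t) = t - c := by
  rw [ellCoord, affPar, add_sub_cancel_left, ← mul_apply_eq_comp, ← map_mul,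
    Matrix.nonsing_inv_mul _ (isUnit_iff_ne_zero.mpr hM), map_one, one_apply_eq_self]

theorem affPar_ellCoord {M : Matrix (Fin n) (Fin n) ℝ} (hM : M.det ≠ 0)
    (z x : EuclideanSpace ℝ (Fin n)) : affPar M z (ellCoord M z 0 x) = x := by
  rw [ellCoord, affPar, sub_zero, ← mul_apply_eq_comp, ← map_mul,
    Matrix.mul_nonsing_inv _ (isUnit_iff_ne_zero.mpr hM), map_one, one_apply_eq_self,
    add_sub_cancel]

theorem continuous_affPar (M : Matrix (Fin n) (Fin n) ℝ) (z : EuclideanSpace ℝ (Fin n)) :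
    Continuous (affPar M z) := by
  unfold affPar
  fun_prop

theorem continuous_ellCoord (M : Matrix (Fin n) (Fin n) ℝ) (z c : EuclideanSpace ℝ (Fin n)) :
    Continuous (ellCoord M z c) := by
  unfold ellCoord
  fun_prop

theorem volume_affPar_image (M : Matrix (Fin n) (Fin n) ℝ) (z : EuclideanSpace ℝ (Fin n))
    (A : Set (EuclideanSpace ℝ (Fin n))) :
    volume (affPar M z '' A) = ENNReal.ofReal |M.det| * volume A := by
  have h1 : affPar M z '' A = (fun x => z + x) ''
      ((Matrix.toLin (EuclideanSpace.basisFun (Fin n) ℝ).toBasis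
        (EuclideanSpace.basisFun (Fin n) ℝ).toBasis M) '' A) := by
    rw [Set.image_image]
    rfl
  rw [h1, Set.image_add_left, measure_preimage_add, Measure.addHaar_image_linearMap,
    LinearMap.det_toLin]

/-- Points with all coordinates in `[0, 1/n]` are averages of the `n` points
`z + n tᵢ (y i - z)` of the segments from `z` to `y i`, hence lie in `S`. -/
theorem affPar_mem {S : Set (EuclideanSpace ℝ (Fin n))} (hn : 0 < n) (hS : Convex ℝ S)
    {z : EuclideanSpace ℝ (Fin n)} (hz : z ∈ S) {y : Fin n → EuclideanSpace ℝ (Fin n)}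
    (hy : ∀ i, y i ∈ S) {t : EuclideanSpace ℝ (Fin n)} (h0 : ∀ i, 0 ≤ t i)
    (h1 : ∀ i, n * t i ≤ 1) : affPar (edgeMat z y) z t ∈ S := by
  have hn' : (n : ℝ) ≠ 0 := by positivity
  have h2 : affPar (edgeMat z y) z t
      = ∑ i, (n : ℝ)⁻¹ • (z + (n * t i) • (y i - z)) := by
    simp only [smul_add, Finset.sum_add_distrib, Finset.sum_const, Finset.card_univ,
      Fintype.card_fin, smul_smul]
    rw [affPar, ← Nat.cast_smul_eq_nsmul ℝ, smul_smul, mul_inv_cancel₀ hn', one_smul]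
    congr 1
    ext j
    simp only [Matrix.ofLp_toEuclideanCLM, Matrix.mulVec, dotProduct, edgeMat, Matrix.of_apply,
      WithLp.ofLp_sum, WithLp.ofLp_smul, Finset.sum_apply, Pi.smul_apply, smul_eq_mul]
    refine Finset.sum_congr rfl fun i _ => ?_
    field_simp
  rw [h2]
  refine hS.sum_mem (fun _ _ => by positivity) (by simp [hn']) fun i _ => ?_
  exact hS.add_smul_sub_mem hz (hy i) ⟨mul_nonneg (by positivity) (h0 i), h1 i⟩

/-! ### Estimates on sections -/

/-- The section described by `fderiv` in place of the gradient. -/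
theorem mem_sectMA_iff {Ω : Set (EuclideanSpace ℝ (Fin n))} {u : EuclideanSpace ℝ (Fin n) → ℝ}
    {z : EuclideanSpace ℝ (Fin n)} {h : ℝ} {x : EuclideanSpace ℝ (Fin n)} :
    x ∈ sectMA Ω u z h ↔ x ∈ Ω ∧ u x < u z + (fderiv ℝ u z x - fderiv ℝ u z z) + h := by
  rw [sectMA, Set.mem_ofPred_eq, inner_gradient_left, map_sub]

theorem isOpen_sectMA {Ω : Set (EuclideanSpace ℝ (Fin n))} (hΩ : IsOpen Ω)
    {u : EuclideanSpace ℝ (Fin n) → ℝ} (hu : ContinuousOn u Ω)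
    (z : EuclideanSpace ℝ (Fin n)) (h : ℝ) : IsOpen (sectMA Ω u z h) := by
  have h1 : ContinuousOn (fun x => u x - (u z + (fderiv ℝ u z x - fderiv ℝ u z z) + h)) Ω :=
    hu.sub (by fun_prop)
  have h2 := h1.isOpen_inter_preimage hΩ (isOpen_Iio (a := (0:ℝ)))
  convert h2 using 1
  ext x
  rw [mem_sectMA_iff]
  simp

theorem convex_sectMA {Ω : Set (EuclideanSpace ℝ (Fin n))}
    {u : EuclideanSpace ℝ (Fin n) → ℝ} (hu : ConvexOn ℝ Ω u)
    (z : EuclideanSpace ℝ (Fin n)) (h : ℝ) : Convex ℝ (sectMA Ω u z h) := by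
  have h1 := (hu.sub ((fderiv ℝ u z).toLinearMap.concaveOn hu.1)).convex_lt
    (u z - fderiv ℝ u z z + h)
  refine (congrArg (Convex ℝ) ?_).mpr h1
  ext x
  rw [mem_sectMA_iff]
  simp only [Set.mem_ofPred_eq, Pi.sub_apply, ContinuousLinearMap.coe_coe]
  constructor <;> rintro ⟨h, h'⟩ <;> exact ⟨h, by linarith⟩

/-- Lower barrier: if the section lies in the ellipsoid `|M⁻¹ (x - z)| ≤ R`, then `u` minus the
barrier `k |M⁻¹ (x - z)|²` with `k = h / (2R²)` attains its minimum over the closed section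
either inside, against `det D²u ≤ Λ`, or on the boundary, against the height `h`. -/
theorem height_pow_le {Ω : Set (EuclideanSpace ℝ (Fin n))}
    {u : EuclideanSpace ℝ (Fin n) → ℝ} {z : EuclideanSpace ℝ (Fin n)} {h Lam R : ℝ}
    (hΩ : IsOpen Ω) (hu : ContDiffOn ℝ 2 u Ω) (hdet : ∀ x ∈ Ω, (Hess u x).det ≤ Lam)
    (hz : z ∈ Ω) (hh : 0 < h) (hcl : closure (sectMA Ω u z h) ⊆ Ω)
    (hK : IsCompact (closure (sectMA Ω u z h))) {M : Matrix (Fin n) (Fin n) ℝ} (hM : M.det ≠ 0)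
    (hR : 0 < R) (hS : ∀ x ∈ sectMA Ω u z h, ‖ellCoord M z 0 x‖ ≤ R) :
    h ^ n ≤ (R ^ 2) ^ n * Lam * M.det ^ 2 := by
  by_contra! hlt
  set l := fderiv ℝ u z with hl
  set k : ℝ := h / (2 * R ^ 2) with hk
  have hkpos : 0 < k := by positivity
  have hkR : 2 * (k * R ^ 2) = h := by rw [hk]; field_simp
  have hzS : z ∈ sectMA Ω u z h := mem_sectMA_iff.mpr ⟨hz, by linarith⟩
  have hSo := isOpen_sectMA hΩ hu.continuousOn z h
  have hcont : ContinuousOn (fun x => u x - (l x + k * ‖ellCoord M z 0 x‖ ^ 2))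
      (closure (sectMA Ω u z h)) := by
    have := continuous_ellCoord M z 0
    exact (hu.continuousOn.mono hcl).sub (by fun_prop)
  obtain ⟨p, hp, hmin⟩ := hK.exists_isMinOn ⟨z, subset_closure hzS⟩ hcont
  have hpR : ‖ellCoord M z 0 p‖ ≤ R := by
    have hc : IsClosed {x | ‖ellCoord M z 0 x‖ ≤ R} :=
      isClosed_le (continuous_ellCoord M z 0).norm continuous_const
    exact closure_minimal hS hc hp
  by_cases hpS : p ∈ sectMA Ω u z h
  · -- an interior minimum forces `det D²u ≥ (2k)ⁿ / (det M)² > Λ`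
    have hloc := hmin.isLocalMin (Filter.mem_of_superset (hSo.mem_nhds hpS) subset_closure)
    have h1 := le_det_of_isLocalMin (hu.contDiffAt (hΩ.mem_nhds (hcl hp))) hM z 0 l hkpos hloc
    have h2 := h1.trans (hdet p (hcl hp))
    rw [div_le_iff₀ (by positivity)] at h2
    have h3 : h ^ n = (R ^ 2) ^ n * (2 * k) ^ n := by
      rw [← mul_pow, ← hkR]
      ring
    rw [h3, mul_assoc] at hlt
    exact absurd (lt_of_mul_lt_mul_left hlt (by positivity)) (not_lt.mpr h2)
  · -- on the boundary `u` lies above its tangent plane by at least `h`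
    have h1 : u z + (l p - l z) + h ≤ u p := by
      by_contra! h1
      exact hpS (mem_sectMA_iff.mpr ⟨hcl hp, h1⟩)
    have h2 := isMinOn_iff.mp hmin z (subset_closure hzS)
    have h3 : ellCoord M z 0 z = 0 := by simp [ellCoord]
    simp only [h3, norm_zero] at h2
    have h4 : k * ‖ellCoord M z 0 p‖ ^ 2 ≤ k * R ^ 2 := by gcongr
    linarith

/-- Upper barrier: if the section contains the ellipsoid `|M⁻¹ (x - z) - c| ≤ r`, then `u` minus the
barrier `k |M⁻¹ (x - z) - c|²` with `k = 2h / r²` attains its maximum over the ellipsoid either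
inside, against `det D²u ≥ λ`, or on its boundary, against the convexity of `u`. -/
theorem le_height_pow {Ω : Set (EuclideanSpace ℝ (Fin n))}
    {u : EuclideanSpace ℝ (Fin n) → ℝ} {z c : EuclideanSpace ℝ (Fin n)} {h lam r : ℝ}
    (hΩ : IsOpen Ω) (hconv : ConvexOn ℝ Ω u) (hu : ContDiffOn ℝ 2 u Ω) (hlam : 0 < lam)
    (hdet : ∀ x ∈ Ω, lam ≤ (Hess u x).det) (hz : z ∈ Ω) (hh : 0 < h)
    {M : Matrix (Fin n) (Fin n) ℝ} (hM : M.det ≠ 0)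
    (hr : 0 < r) (hS : affPar M z '' Metric.closedBall c r ⊆ sectMA Ω u z h) :
    lam * M.det ^ 2 ≤ (4 / r ^ 2) ^ n * h ^ n := by
  by_contra! hlt
  set l := fderiv ℝ u z with hl
  set k : ℝ := 2 * h / r ^ 2 with hk
  have hkr : k * r ^ 2 = 2 * h := by rw [hk]; field_simp
  set B := affPar M z '' Metric.closedBall c r with hB
  have hBΩ : B ⊆ Ω := fun x hx => (mem_sectMA_iff.mp (hS hx)).1
  have hBiff : ∀ x, x ∈ B ↔ ‖ellCoord M z c x‖ ≤ r := by
    intro x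
    constructor
    · rintro ⟨t, ht, rfl⟩
      rw [ellCoord_affPar hM]
      exact mem_closedBall_iff_norm.mp ht
    · intro hx
      refine ⟨ellCoord M z 0 x, ?_, affPar_ellCoord hM z x⟩
      rw [mem_closedBall_iff_norm]
      simpa [ellCoord] using hx
  have hBc : IsCompact B := (isCompact_closedBall c r).image (continuous_affPar M z)
  have hq : affPar M z c ∈ B := ⟨c, Metric.mem_closedBall_self hr.le, rfl⟩
  have hcont : ContinuousOn (fun x => u x - (l x + k * ‖ellCoord M z c x‖ ^ 2)) B := by
    have := continuous_ellCoord M z c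
    exact (hu.continuousOn.mono hBΩ).sub (by fun_prop)
  obtain ⟨p, hp, hmax⟩ := hBc.exists_isMaxOn ⟨_, hq⟩ hcont
  have hcp := hu.contDiffAt (hΩ.mem_nhds (hBΩ hp))
  rcases ((hBiff p).mp hp).lt_or_eq with hlt' | heq
  · -- an interior maximum forces `det D²u ≤ (2k)ⁿ / (det M)² < λ`
    have hnhds : B ∈ nhds p := by
      have ho : IsOpen {x | ‖ellCoord M z c x‖ < r} :=
        isOpen_lt (continuous_ellCoord M z c).norm continuous_const
      exact Filter.mem_of_superset (ho.mem_nhds hlt') fun x hx => (hBiff x).mpr (le_of_lt hx)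
    have hpd := hess_posDef hΩ hconv (hBΩ hp) hcp (hlam.trans_le (hdet p (hBΩ hp)))
    have h1 := (hdet p (hBΩ hp)).trans
      (det_le_of_isLocalMax hcp hpd M z c l k (hmax.isLocalMax hnhds))
    rw [le_div_iff₀ (by positivity)] at h1
    have h2 : (2 * k) ^ n = (4 / r ^ 2) ^ n * h ^ n := by
      rw [← mul_pow, hk]
      ring
    linarith
  · -- on the sphere the barrier would push `u` at the centre below its tangent plane at `z`
    have h1 := isMaxOn_iff.mp hmax _ hq
    have h2 := (mem_sectMA_iff.mp (hS hp)).2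
    have h3 := gradient_ineq hconv hz (hBΩ hq)
      ((hu.contDiffAt (hΩ.mem_nhds hz)).differentiableAt (by simp))
    rw [map_sub] at h3
    simp only [heq, ellCoord_affPar hM, sub_self, norm_zero] at h1
    linarith

/-- A weak form of John's lemma: a bounded convex open set lies between two images of Euclidean
balls, of radii depending only on `n`, under one invertible affine map. -/
theorem exists_matrix {S : Set (EuclideanSpace ℝ (Fin n))} (hn : 0 < n)
    {z : EuclideanSpace ℝ (Fin n)} (hS : IsOpen S) (hconv : Convex ℝ S) (hz : z ∈ S)
    (hK : IsCompact (closure S)) :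
    ∃ M : Matrix (Fin n) (Fin n) ℝ, M.det ≠ 0 ∧
      (∀ x ∈ S, ‖ellCoord M z 0 x‖ ≤ 2 * n) ∧
      affPar M z '' Metric.closedBall (WithLp.toLp 2 fun _ => 1 / (2 * (n : ℝ))) (1 / (2 * n)) ⊆ S
    := by
  have hn' : (0 : ℝ) < n := by positivity
  obtain ⟨y, hy, hdet, hc⟩ := exists_almost_max_simplex hS hz hK
  refine ⟨edgeMat z y, hdet, fun x hx => ?_, ?_⟩
  · have h1 : ‖ellCoord (edgeMat z y) z 0 x‖ ^ 2 ≤ (2 * n) ^ 2 := by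
      rw [EuclideanSpace.real_norm_sq_eq]
      calc ∑ i, (ellCoord (edgeMat z y) z 0 x).ofLp i ^ 2 ≤ ∑ _i : Fin n, (2:ℝ) ^ 2 := by
            refine Finset.sum_le_sum fun i _ => ?_
            have := hc x hx i
            rw [← sq_abs]
            refine pow_le_pow_left₀ (abs_nonneg _) ?_ 2
            simpa [ellCoord, Matrix.mulVec_sub] using this
        _ = 4 * n := by simp; ring
        _ ≤ (2 * n) ^ 2 := by
            have : (1:ℝ) ≤ n := by exact_mod_cast hn
            nlinarith
    exact (sq_le_sq₀ (by positivity) (by positivity)).mp h1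
  · rintro _ ⟨t, ht, rfl⟩
    have h1 : ∀ i, |t i - 1 / (2 * (n : ℝ))| ≤ 1 / (2 * n) := fun i => by
      have h2 := PiLp.norm_apply_le (t - WithLp.toLp 2 fun _ => 1 / (2 * (n : ℝ))) i
      have h3 := mem_closedBall_iff_norm.mp ht
      exact h2.trans h3
    refine affPar_mem hn hconv hz hy (fun i => ?_) fun i => ?_
    · have := (abs_le.mp (h1 i)).1
      linarith
    · have h2 := (abs_le.mp (h1 i)).2
      have h3 : t i ≤ 1 / n := by
        have : (1:ℝ) / n = 1 / (2 * n) + 1 / (2 * n) := by field_simp; norm_num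
        linarith
      rwa [le_div_iff₀ hn', mul_comm] at h3

end SectionVolume

/-- volume estimates for compactly contained sections of solutions of the
Monge–Ampère equation with pinched Hessian determinant. -/
theorem stmt6 (n : ℕ) (hn : 2 ≤ n) (lam Lam : ℝ) (hlam : 0 < lam) (hlamLam : lam ≤ Lam) :
    ∃ C₀ > (0:ℝ), ∀ (Ω : Set (EuclideanSpace ℝ (Fin n)))
      (u : EuclideanSpace ℝ (Fin n) → ℝ) (z : EuclideanSpace ℝ (Fin n)) (h : ℝ),
      IsOpen Ω → Convex ℝ Ω → StrictConvexOn ℝ Ω u → ContDiffOn ℝ 2 u Ω →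
      (∀ x ∈ Ω, lam ≤ (Hess u x).det ∧ (Hess u x).det ≤ Lam) →
      z ∈ Ω → 0 < h →
      closure (sectMA Ω u z h) ⊆ Ω → IsCompact (closure (sectMA Ω u z h)) →
      C₀⁻¹ * h ^ ((n : ℝ) / 2) ≤ (volume (sectMA Ω u z h)).toReal ∧
        (volume (sectMA Ω u z h)).toReal ≤ C₀ * h ^ ((n : ℝ) / 2) := by
  have hn0 : 0 < n := by omega
  have hn' : (0 : ℝ) < n := by positivity
  have hLam : 0 < Lam := hlam.trans_le hlamLam
  set r : ℝ := 1 / (2 * n) with hr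
  have hrpos : 0 < r := by positivity
  set R : ℝ := 2 * n with hR
  have hRpos : 0 < R := by positivity
  set c : EuclideanSpace ℝ (Fin n) := WithLp.toLp 2 fun _ => 1 / (2 * (n : ℝ)) with hc
  set V₁ := (volume (Metric.closedBall (0 : EuclideanSpace ℝ (Fin n)) R)).toReal with hV₁
  set V₂ := (volume (Metric.closedBall c r)).toReal with hV₂
  have hV₁pos : 0 < V₁ :=
    ENNReal.toReal_pos (Metric.measure_closedBall_pos _ _ hRpos).ne' measure_closedBall_lt_top.ne
  have hV₂pos : 0 < V₂ :=
    ENNReal.toReal_pos (Metric.measure_closedBall_pos _ _ hrpos).ne' measure_closedBall_lt_top.ne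
  set A := √((4 / r ^ 2) ^ n / lam) with hA
  set B := √((R ^ 2) ^ n * Lam) with hB
  have hApos : 0 < A := Real.sqrt_pos.mpr (by positivity)
  have hBpos : 0 < B := Real.sqrt_pos.mpr (by positivity)
  refine ⟨A * V₁ + B / V₂, by positivity, ?_⟩
  intro Ω u z h hΩ _ hsc hu hdet hz hh hcl hK
  have hconv := hsc.convexOn
  have hzS : z ∈ sectMA Ω u z h := SectionVolume.mem_sectMA_iff.mpr ⟨hz, by linarith⟩
  obtain ⟨M, hM, hout, hin⟩ := SectionVolume.exists_matrix hn0
    (SectionVolume.isOpen_sectMA hΩ hu.continuousOn z h) (SectionVolume.convex_sectMA hconv z h)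
    hzS hK
  have hlow := SectionVolume.height_pow_le hΩ hu (fun x hx => (hdet x hx).2) hz hh hcl hK hM
    hRpos hout
  have hupp := SectionVolume.le_height_pow hΩ hconv hu hlam (fun x hx => (hdet x hx).1) hz hh hM
    hrpos hin
  set X := h ^ ((n : ℝ) / 2) with hX
  have hXpos : 0 < X := Real.rpow_pos_of_pos hh _
  have hX2 : X ^ 2 = h ^ n := by
    rw [hX, ← Real.rpow_natCast, ← Real.rpow_mul hh.le, ← Real.rpow_natCast h n]
    congr 1
    push_cast
    ring
  set D := |M.det| with hD
  have hDpos : 0 < D := abs_pos.mpr hM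
  have hD2 : M.det ^ 2 = D ^ 2 := (sq_abs _).symm
  rw [← hX2, hD2] at hlow hupp
  have hDX : D ≤ A * X := by
    refine (sq_le_sq₀ (by positivity) (by positivity)).mp ?_
    rw [mul_pow, hA, Real.sq_sqrt (by positivity), div_mul_eq_mul_div, le_div_iff₀ hlam]
    linarith
  have hXD : X ≤ B * D := by
    refine (sq_le_sq₀ (by positivity) (by positivity)).mp ?_
    rwa [mul_pow, hB, Real.sq_sqrt (by positivity)]
  have hfin : volume (sectMA Ω u z h) ≠ ⊤ :=
    ((measure_mono subset_closure).trans_lt hK.measure_lt_top).ne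
  have hvup : (volume (sectMA Ω u z h)).toReal ≤ D * V₁ := by
    have h1 : sectMA Ω u z h ⊆ SectionVolume.affPar M z '' Metric.closedBall 0 R := fun x hx =>
      ⟨SectionVolume.ellCoord M z 0 x, by simpa using hout x hx,
        SectionVolume.affPar_ellCoord hM z x⟩
    have h2 := measure_mono (μ := volume) h1
    rw [SectionVolume.volume_affPar_image] at h2
    have h3 := ENNReal.toReal_mono
      (ENNReal.mul_ne_top ENNReal.ofReal_ne_top measure_closedBall_lt_top.ne) h2
    rwa [ENNReal.toReal_mul, ENNReal.toReal_ofReal (abs_nonneg _)] at h3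
  have hvlow : D * V₂ ≤ (volume (sectMA Ω u z h)).toReal := by
    have h2 := measure_mono (μ := volume) hin
    rw [SectionVolume.volume_affPar_image] at h2
    have h3 := ENNReal.toReal_mono hfin h2
    rwa [ENNReal.toReal_mul, ENNReal.toReal_ofReal (abs_nonneg _)] at h3
  constructor
  · refine le_trans ?_ hvlow
    rw [inv_mul_le_iff₀ (by positivity)]
    calc X ≤ B * D := hXD
      _ = B / V₂ * (D * V₂) := by field_simp
      _ ≤ (A * V₁ + B / V₂) * (D * V₂) := by
          gcongr
          linarith [mul_pos hApos hV₁pos]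
  · calc (volume (sectMA Ω u z h)).toReal ≤ D * V₁ := hvup
      _ ≤ A * X * V₁ := by gcongr
      _ = A * V₁ * X := by ring
      _ ≤ (A * V₁ + B / V₂) * X := by
          gcongr
          linarith [div_pos hBpos hV₂pos]
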